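/- arXiv:0802.2554 — 2 statements merged into one kernel-verified Lean document; each statement's English description precedes it below -/
import Mathlib

section
/- Let G ≤ Aut(X^*) be a contracting self-similar group with nucleus 𝒩. Then for every w ∈ X^ω the group of G-germs G_(w) is finite of cardinality at most |𝒩|. -/
/-! The rooted tree `X^*` of finite words over a fixed alphabet `X`, realized via its
boundary `X^ω = ℕ → X`; automorphisms, restrictions, self-similar and contracting groups. -/

/-- A permutation of the boundary `X^ω = ℕ → X` is (induced by) an automorphism of the
rooted tree `X^*` iff for all `n` it preserves the relation "agree on the first `n`
letters" (two sequences have the same length-`n` beginning iff their images do). -/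
def IsTreeAut {X : Type*} (f : Equiv.Perm (ℕ → X)) : Prop :=
  ∀ (n : ℕ) (w w' : ℕ → X),
    (∀ i, i < n → w i = w' i) ↔ (∀ i, i < n → f w i = f w' i)

/-- The automorphism group `Aut X^*` of the rooted tree `X^*`, realized as the group of
those permutations of the boundary `X^ω` induced by tree automorphisms. -/
def treeAut (X : Type*) : Subgroup (Equiv.Perm (ℕ → X)) where
  carrier := {f | IsTreeAut f}
  one_mem' := by intro n w w'; simp
  mul_mem' := by
    intro f g hf hg n w w'
    have h := (hg n w w').trans (hf n (g w) (g w'))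
    simpa using h
  inv_mem' := by
    intro f hf n w w'
    have h := (hf n (f⁻¹ w) (f⁻¹ w')).symm
    simpa using h

/-- The concatenation `v·u ∈ X^ω` of a finite word `v ∈ X^m` and a sequence `u ∈ X^ω`. -/
def wappend {X : Type*} {m : ℕ} (v : Fin m → X) (u : ℕ → X) : ℕ → X :=
  fun i => if h : i < m then v ⟨i, h⟩ else u (i - m)

/-- The underlying function of the restriction `f|_v`: it sends `u` to the sequence with
`v·u ↦ (f v)·(f|_v u)`, i.e. `(f|_v u) j` is letter `m + j` of `f (v·u)`. -/
def restrictFun {X : Type*} (f : Equiv.Perm (ℕ → X)) {m : ℕ} (v : Fin m → X) :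
    (ℕ → X) → (ℕ → X) :=
  fun u j => f (wappend v u) (m + j)

open scoped Classical in
/-- The restriction (section, state) `f|_v` of `f` at the vertex `v ∈ X^*`: the unique
automorphism of `X^*` with `f (v·u) = (f v)·(f|_v u)` for all `u`.  (For `f` a tree
automorphism the underlying function `restrictFun f v` is bijective, and `f|_v` is the
corresponding permutation of the boundary.) -/
noncomputable def restrictPerm {X : Type*} (f : Equiv.Perm (ℕ → X)) {m : ℕ}
    (v : Fin m → X) : Equiv.Perm (ℕ → X) :=
  if h : Function.Bijective (restrictFun f v) then Equiv.ofBijective _ h else 1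

/-- A group `G` of permutations of the boundary is self-similar if it is closed under
taking restrictions. -/
def SelfSimilar {X : Type*} (G : Subgroup (Equiv.Perm (ℕ → X))) : Prop :=
  ∀ g ∈ G, ∀ (m : ℕ) (v : Fin m → X), restrictPerm g v ∈ G

/-- The (self-similar) group `G` is contracting with the finite set `N ⊆ G`: for every
`g ∈ G` there is `n` such that `g|_v ∈ N` for all words `v` of length greater than `n`. -/
def IsContractingWith {X : Type*} (G : Subgroup (Equiv.Perm (ℕ → X)))
    (N : Finset (Equiv.Perm (ℕ → X))) : Prop :=
  (N : Set (Equiv.Perm (ℕ → X))) ⊆ (G : Set (Equiv.Perm (ℕ → X))) ∧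
    ∀ g ∈ G, ∃ n : ℕ, ∀ (m : ℕ) (v : Fin m → X), n < m → restrictPerm g v ∈ N

/-! On the sequences that begin with a word `v`, a tree automorphism is determined by the image of
`v` and by its restriction at `v`. Finitely many automorphisms with restrictions along `w`
eventually in `N` all have them in `N` at one common beginning `v` of `w`; if they are more than
`|N|` in number, two of them have the same restriction at `v`, and if moreover all of them send `w`
to the same point, these two agree on all sequences beginning with `v`. -/

section Words

variable {X : Type*} {m : ℕ}

/-- The beginning of length `m` of a sequence, as a word in the form that `wappend` takes. -/
def wtake (m : ℕ) (w : ℕ → X) : Fin m → X :=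
  fun i => w i

/-- The sequence that remains after deleting the first `m` letters; `m + j` matches the indexing
of `restrictFun`. -/
def wdrop (m : ℕ) (w : ℕ → X) : ℕ → X :=
  fun j => w (m + j)

theorem wtake_eq_wtake_iff {u w : ℕ → X} :
    wtake m u = wtake m w ↔ ∀ i, i < m → u i = w i := by
  simp only [funext_iff, Fin.forall_iff, wtake]

@[simp]
theorem wtake_wappend (v : Fin m → X) (u : ℕ → X) : wtake m (wappend v u) = v := by
  ext i
  simp [wtake, wappend]

@[simp]
theorem wdrop_wappend (v : Fin m → X) (u : ℕ → X) : wdrop m (wappend v u) = u := by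
  ext j
  simp [wdrop, wappend]

@[simp]
theorem wappend_wtake_wdrop (m : ℕ) (w : ℕ → X) : wappend (wtake m w) (wdrop m w) = w := by
  ext i
  by_cases hi : i < m
  · simp [wappend, wtake, hi]
  · simp [wappend, wdrop, hi, Nat.add_sub_of_le (Nat.le_of_not_lt hi)]

theorem eq_of_wtake_eq_of_wdrop_eq {u w : ℕ → X} (htake : wtake m u = wtake m w)
    (hdrop : wdrop m u = wdrop m w) : u = w := by
  rw [← wappend_wtake_wdrop m u, htake, hdrop, wappend_wtake_wdrop]

theorem restrictFun_apply (f : Equiv.Perm (ℕ → X)) (v : Fin m → X) (u : ℕ → X) :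
    restrictFun f v u = wdrop m (f (wappend v u)) :=
  rfl

end Words

namespace IsTreeAut

variable {X : Type*} {f g h : Equiv.Perm (ℕ → X)} {m : ℕ} {u w : ℕ → X}

theorem wtake_apply_eq_iff (hf : IsTreeAut f) :
    wtake m (f u) = wtake m (f w) ↔ wtake m u = wtake m w := by
  simpa only [wtake_eq_wtake_iff] using (hf m u w).symm

theorem restrictFun_injective (hf : IsTreeAut f) (v : Fin m → X) :
    Function.Injective (restrictFun f v) := by
  intro u u' hdrop
  have htake : wtake m (f (wappend v u)) = wtake m (f (wappend v u')) :=
    hf.wtake_apply_eq_iff.2 (by simp only [wtake_wappend])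
  have happend : wappend v u = wappend v u' :=
    f.injective (eq_of_wtake_eq_of_wdrop_eq htake hdrop)
  simpa only [wdrop_wappend] using congrArg (wdrop m) happend

theorem restrictFun_surjective (hf : IsTreeAut f) (v : Fin m → X) :
    Function.Surjective (restrictFun f v) := by
  intro y
  -- The image `f v` of the word `v` is read off from the image of any sequence beginning with `v`.
  let z := wappend (wtake m (f (wappend v y))) y
  have htake : wtake m (f.symm z) = v := by
    rw [← wtake_wappend v y, ← hf.wtake_apply_eq_iff, Equiv.apply_symm_apply, wtake_wappend]
  refine ⟨wdrop m (f.symm z), ?_⟩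
  calc
    restrictFun f v (wdrop m (f.symm z))
      = wdrop m (f (wappend (wtake m (f.symm z)) (wdrop m (f.symm z)))) := by
        rw [htake, restrictFun_apply]
    _ = wdrop m z := by rw [wappend_wtake_wdrop, Equiv.apply_symm_apply]
    _ = y := wdrop_wappend _ _

theorem coe_restrictPerm (hf : IsTreeAut f) (v : Fin m → X) :
    ⇑(restrictPerm f v) = restrictFun f v := by
  rw [restrictPerm, dif_pos ⟨hf.restrictFun_injective v, hf.restrictFun_surjective v⟩]
  rfl

theorem restrictPerm_wtake_wdrop (hf : IsTreeAut f) (m : ℕ) (u : ℕ → X) :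
    restrictPerm f (wtake m u) (wdrop m u) = wdrop m (f u) := by
  rw [hf.coe_restrictPerm, restrictFun_apply, wappend_wtake_wdrop]

theorem apply_eq_apply_of_restrictPerm_eq (hg : IsTreeAut g) (hh : IsTreeAut h)
    (hw : wtake m (g w) = wtake m (h w))
    (hrestrict : restrictPerm g (wtake m w) = restrictPerm h (wtake m w))
    (hu : wtake m u = wtake m w) : g u = h u := by
  refine eq_of_wtake_eq_of_wdrop_eq (m := m) ?_ ?_
  · rw [hg.wtake_apply_eq_iff.2 hu, hw, hh.wtake_apply_eq_iff.2 hu]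
  · rw [← hg.restrictPerm_wtake_wdrop, ← hh.restrictPerm_wtake_wdrop, hu, hrestrict]

end IsTreeAut

theorem IsContractingWith.eventually_restrictPerm_wtake_mem {X : Type*}
    {G : Subgroup (Equiv.Perm (ℕ → X))} {N : Finset (Equiv.Perm (ℕ → X))}
    (hN : IsContractingWith G N) {g : Equiv.Perm (ℕ → X)} (hg : g ∈ G) (w : ℕ → X) :
    ∀ᶠ m in Filter.atTop, restrictPerm g (wtake m w) ∈ N := by
  obtain ⟨n, hn⟩ := hN.2 g hg
  exact (Filter.eventually_gt_atTop n).mono fun m hm => hn m _ hm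

theorem stmt_5_general {X : Type*} {N T : Finset (Equiv.Perm (ℕ → X))} {w x : ℕ → X}
    (haut : ∀ g ∈ T, IsTreeAut g) (hmap : ∀ g ∈ T, g w = x)
    (hcontract : ∀ g ∈ T, ∀ᶠ m in Filter.atTop, restrictPerm g (wtake m w) ∈ N)
    (hcard : N.card < T.card) :
    ∃ g ∈ T, ∃ h ∈ T, g ≠ h ∧
      ∃ m : ℕ, ∀ u : ℕ → X, (∀ i, i < m → u i = w i) → g u = h u := by
  obtain ⟨m, hm⟩ := ((Filter.eventually_all_finset T).2 hcontract).exists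
  obtain ⟨g, hg, h, hh, hne, hrestrict⟩ :=
    Finset.exists_ne_map_eq_of_card_lt_of_maps_to hcard hm
  have hw : wtake m (g w) = wtake m (h w) := by rw [hmap g hg, hmap h hh]
  exact ⟨g, hg, h, hh, hne, m, fun u hu =>
    (haut g hg).apply_eq_apply_of_restrictPerm_eq (haut h hh) hw hrestrict
      (wtake_eq_wtake_iff.2 hu)⟩

/-- **Proposition `pr:finitegerms`.** Let `G ≤ Aut X^*` be a contracting
self-similar group with nucleus `N`. Then for every `w ∈ X^ω` the group of `G`-germs
`G_(w)` is finite of cardinality at most `|N|`: any finite subset of the stabilizer of `w`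
in `G` with more than `|N|` elements contains two distinct elements with the same germ at
`w` (i.e. acting identically on a neighborhood of `w`). -/
theorem stmt_5 (X : Type*) [Fintype X] [Nonempty X]
    (G : Subgroup (Equiv.Perm (ℕ → X))) (hG : G ≤ treeAut X) (hss : SelfSimilar G)
    -- `N` is the nucleus of `G`: the smallest finite set witnessing contraction
    (N : Finset (Equiv.Perm (ℕ → X)))
    (hN : IsContractingWith G N)
    (hmin : ∀ N' : Finset (Equiv.Perm (ℕ → X)), IsContractingWith G N' → N ⊆ N')
    (w : ℕ → X)
    (T : Finset (Equiv.Perm (ℕ → X))) (hT : ∀ g ∈ T, g ∈ G ∧ g w = w)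
    (hcard : N.card < T.card) :
    ∃ g ∈ T, ∃ h ∈ T, g ≠ h ∧
      ∃ m : ℕ, ∀ u : ℕ → X, (∀ i, i < m → u i = w i) → g u = h u :=
  stmt_5_general (fun g hg => hG (hT g hg).1) (fun g hg => (hT g hg).2)
    (fun g hg => hN.eventually_restrictPerm_wtake_mem (hT g hg).1 w) hcard
end

section
/- Let X be a finite set and let d ≥ 0. A finite-state automorphism g of X^* belongs to P_d(X) if and only if there exists a finite set of eventually periodic sequences W = {v_i u_i^ω : 1 ≤ i ≤ k} ⊆ X^ω such that for each i the restriction g|_{v_i u_i^n} does not depend on n, and g|_v ∈ P_{d-1}(X) for every v ∈ X^* that is not a beginning of any v_i u_i^ω. -/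
/-- The restriction `f|_v` is trivial: `f` maps `v·u` to `(f v)·u` for every `u`. -/
def RestrictTrivial {X : Type*} (f : Equiv.Perm (ℕ → X)) {m : ℕ} (v : Fin m → X) : Prop :=
  ∀ u : ℕ → X, (∀ i : Fin m, u i = v i) → ∀ i, m ≤ i → f u i = u i

/-- The growth function `θ_f(n) = |{v ∈ X^n : f|_v ≠ id}|` of `f`. -/
noncomputable def thetaGrowth {X : Type*} (f : Equiv.Perm (ℕ → X)) (n : ℕ) : ℕ :=
  {v : Fin n → X | ¬ RestrictTrivial f v}.ncard

/-- `f` is finite-state: it has only finitely many restrictions `f|_v`, `v ∈ X^*`. -/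
def FiniteState {X : Type*} (f : Equiv.Perm (ℕ → X)) : Prop :=
  {h : Equiv.Perm (ℕ → X) | ∃ (m : ℕ) (v : Fin m → X), restrictPerm f v = h}.Finite

/-- `f` is finitary: for some `n`, `f|_v = id` for all words `v` of length `n`. -/
def IsFinitary {X : Type*} (f : Equiv.Perm (ℕ → X)) : Prop :=
  ∃ n : ℕ, ∀ u : ℕ → X, ∀ i, n ≤ i → f u i = u i

/-- Membership in Sidki's group `P_d(X)`, for `d ≥ -1`: for `d = -1`, the finitary
automorphisms of `X^*`; for `d ≥ 0`, the finite-state automorphisms of `X^*` whose growth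
function `θ` is bounded above by a polynomial of degree `d`. -/
def MemP {X : Type*} (d : ℤ) (f : Equiv.Perm (ℕ → X)) : Prop :=
  IsTreeAut f ∧
    ((d = -1 ∧ IsFinitary f) ∨
      (0 ≤ d ∧ FiniteState f ∧
        ∃ p : Polynomial ℕ, (p.natDegree : ℤ) ≤ d ∧ ∀ n, thetaGrowth f n ≤ p.eval n))

/-- The set `Σ_f` of `f`-singular points of `X^ω`: points none of whose beginnings `v`
satisfy `f|_v = id`. -/
def singularSet {X : Type*} (f : Equiv.Perm (ℕ → X)) : Set (ℕ → X) :=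
  {w | ∀ m : ℕ, ¬ RestrictTrivial f (fun i : Fin m => w i)}

open scoped Classical in
/-- The eventually periodic sequence `v·u^ω ∈ X^ω` determined by a finite word `v` of
length `k` and a (nonempty) finite word `u` of length `l`. -/
noncomputable def epSeq {X : Type*} [Nonempty X] (k l : ℕ) (v : Fin k → X) (u : Fin l → X) :
    ℕ → X :=
  fun j => if h : j < k then v ⟨j, h⟩
    else if hl : 0 < l then u ⟨(j - k) % l, Nat.mod_lt _ hl⟩ else Classical.arbitrary X

/-!
The finitely many restrictions of `g` are the states of an automaton, and `θ_g` counts the words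
that lead to a nontrivial state. A state is heavy if its count is not bounded by a polynomial of
degree less than `d`; the sequences `v_i u_i^ω` are those that pass only through heavy states.

If `θ_g` is bounded by a polynomial of degree `d`, only one such sequence starts at a state `s`
that lies on a cycle `a`. Otherwise one could leave `a` after any number of turns and still reach
one fixed heavy state that lies on a cycle itself; this gives at least `j` times the count of that
state among the words of length `n + j P`, so its count would have degree less than `d`. Since a
heavy sequence repeats a state within its first `|Q|` steps, uniqueness makes it eventually periodic
and determined by its first `|Q|` letters.

Conversely, if the words outside the beginnings of finitely many sequences lead to states that are
not heavy, then boundedly many words of each length lead to heavy states. Splitting the remaining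
words at the first state that is not heavy bounds `θ_g` by partial sums of functions of degree less
than `d`.
-/

section GrowthDegree

open Polynomial Filter

/-- A function on `ℕ` is eventually bounded by a polynomial of degree less than `d`. The strict
inequality makes the vanishing growth of finitary automorphisms the case `d = 0`. -/
def GrowthDegreeLT (d : ℕ) (f : ℕ → ℕ) : Prop :=
  ∃ p ∈ degreeLT ℕ d, ∀ᶠ n in atTop, f n ≤ p.eval n

theorem monotone_eval_nat (p : ℕ[X]) : Monotone fun n => p.eval n := fun m n hmn => by
  simp only [eval_eq_sum_range]
  gcongr

namespace GrowthDegreeLT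

variable {d : ℕ} {f h : ℕ → ℕ}

theorem mono (hh : GrowthDegreeLT d h) (hf : ∀ n, f n ≤ h n) : GrowthDegreeLT d f :=
  let ⟨p, hp, hbound⟩ := hh
  ⟨p, hp, hbound.mono fun n hn => (hf n).trans hn⟩

theorem succ (hf : GrowthDegreeLT d f) : GrowthDegreeLT (d + 1) f :=
  let ⟨p, hp, hbound⟩ := hf
  ⟨p, degreeLT_mono d.le_succ hp, hbound⟩

theorem const (d k : ℕ) : GrowthDegreeLT (d + 1) fun _ => k :=
  ⟨C k, mem_degreeLT.2 (degree_C_le.trans_lt (by exact_mod_cast d.succ_pos)), by simp⟩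

theorem add (hf : GrowthDegreeLT d f) (hh : GrowthDegreeLT d h) :
    GrowthDegreeLT d fun n => f n + h n := by
  obtain ⟨p, hp, hfp⟩ := hf
  obtain ⟨r, hr, hhr⟩ := hh
  refine ⟨p + r, add_mem hp hr, ?_⟩
  filter_upwards [hfp, hhr] with n hfn hhn
  rw [eval_add]
  exact add_le_add hfn hhn

theorem const_mul (hf : GrowthDegreeLT d f) (k : ℕ) : GrowthDegreeLT d fun n => k * f n := by
  obtain ⟨p, hp, hfp⟩ := hf
  refine ⟨k • p, Submodule.smul_mem _ k hp, hfp.mono fun n hn => ?_⟩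
  rw [eval_smul, smul_eq_mul]
  exact Nat.mul_le_mul_left k hn

theorem sum {ι : Type*} {s : Finset ι} {F : ι → ℕ → ℕ} (hF : ∀ i ∈ s, GrowthDegreeLT d (F i)) :
    GrowthDegreeLT d fun n => ∑ i ∈ s, F i n := by
  choose! p hp hbound using hF
  refine ⟨∑ i ∈ s, p i, sum_mem hp, ?_⟩
  filter_upwards [s.eventually_all.2 hbound] with n hn
  rw [eval_finsetSum]
  exact Finset.sum_le_sum hn

theorem comp_add_right (hf : GrowthDegreeLT d f) (c : ℕ) :
    GrowthDegreeLT d fun n => f (n + c) := by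
  obtain ⟨p, hp, hbound⟩ := hf
  refine ⟨taylor c p, by simpa [mem_degreeLT] using hp, ?_⟩
  filter_upwards [(tendsto_add_atTop_nat c).eventually hbound] with n hn
  rwa [taylor_eval]

theorem of_comp_succ (hf : GrowthDegreeLT d fun n => f (n + 1)) : GrowthDegreeLT d f := by
  obtain ⟨p, hp, hbound⟩ := hf
  refine ⟨p, hp, ?_⟩
  filter_upwards [(tendsto_sub_atTop_nat 1).eventually hbound, eventually_ge_atTop 1] with n hn hn1
  rw [Nat.sub_add_cancel hn1] at hn
  exact hn.trans (monotone_eval_nat p (Nat.sub_le n 1))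

theorem sum_range (hf : GrowthDegreeLT d f) :
    GrowthDegreeLT (d + 1) fun n => ∑ j ∈ Finset.range n, f j := by
  obtain ⟨p, hp, hbound⟩ := hf
  obtain ⟨N, hN⟩ := eventually_atTop.1 hbound
  have hXp : GrowthDegreeLT (d + 1) fun n => n * p.eval n := by
    refine ⟨X * p, ?_, by simp⟩
    rw [mem_degreeLT, degree_lt_iff_coeff_zero] at hp ⊢
    rintro (- | m) hm
    · exact coeff_X_mul_zero p
    · rw [coeff_X_mul]
      exact hp m (Nat.le_of_succ_le_succ hm)
  refine ((const d (∑ j ∈ Finset.range N, f j)).add hXp).mono fun n => ?_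
  induction n with
  | zero => simp
  | succ n ih =>
    rcases lt_or_ge n N with hnN | hnN
    · exact le_add_right (Finset.sum_le_sum_of_subset (Finset.range_mono hnN))
    · calc ∑ j ∈ Finset.range (n + 1), f j
          = ∑ j ∈ Finset.range n, f j + f n := Finset.sum_range_succ f n
        _ ≤ ∑ j ∈ Finset.range N, f j + n * p.eval n + p.eval n := add_le_add ih (hN n hnN)
        _ = ∑ j ∈ Finset.range N, f j + (n + 1) * p.eval n := by ring
        _ ≤ ∑ j ∈ Finset.range N, f j + (n + 1) * p.eval (n + 1) := by
          gcongr
          exact monotone_eval_nat p n.le_succ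

theorem of_mul_le {F : ℕ → ℕ} (hF : GrowthDegreeLT (d + 1) F) {P : ℕ}
    (hle : ∀ j n, j * f n ≤ F (n + j * P)) : GrowthDegreeLT d f := by
  obtain ⟨p, hp, hbound⟩ := hF
  let r : ℕ[X] := p.comp (C (P + 1) * X)
  have hr : r.divX ∈ degreeLT ℕ d := by
    rw [mem_degreeLT, degree_lt_iff_coeff_zero] at hp ⊢
    intro m hm
    rw [coeff_divX, comp_C_mul_X_coeff, hp (m + 1) (Nat.succ_le_succ hm), zero_mul]
  have hlim : Tendsto (fun n => (P + 1) * n) atTop atTop :=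
    tendsto_id.const_mul_atTop' P.succ_pos
  refine ⟨r.divX, hr, ?_⟩
  filter_upwards [hlim.eventually hbound, eventually_gt_atTop (r.coeff 0)] with n hn hn0
  -- Taking `j = n` turns the degree of `p` into a bound for `n * f n`.
  have hmul : n * f n ≤ n * r.divX.eval n + r.coeff 0 := calc
    n * f n ≤ F (n + n * P) := hle n n
    _ = F ((P + 1) * n) := by ring_nf
    _ ≤ p.eval ((P + 1) * n) := hn
    _ = r.eval n := by simp [r]
    _ = n * r.divX.eval n + r.coeff 0 := by
      conv_lhs => rw [← divX_mul_X_add r]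
      simp [mul_comm]
  by_contra! hlt
  nlinarith

theorem of_add_le {F : ℕ → ℕ} (hF : GrowthDegreeLT (d + 1) F) {k l : ℕ} (hk : 0 < k)
    (hadd : ∀ n, F n + f n ≤ F (l + n)) (hf : ∀ n, f n ≤ f (k + n)) : GrowthDegreeLT d f := by
  have hfmul : ∀ j n, f n ≤ f (n + j * k) := fun j n => by
    induction j with
    | zero => simp
    | succ j ih => exact (ih.trans (hf _)).trans_eq (by ring_nf)
  have hFmul : ∀ j n, F n ≤ F (n + j * l) := fun j n => by
    induction j with
    | zero => simp
    | succ j ih => exact (ih.trans ((Nat.le_add_right _ _).trans (hadd _))).trans_eq (by ring_nf)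
  obtain ⟨k, rfl⟩ := Nat.exists_eq_add_one_of_ne_zero hk.ne'
  refine hF.of_mul_le (P := (k + 1) * l) fun j n => ?_
  induction j with
  | zero => simp
  | succ j ih =>
    calc (j + 1) * f n = j * f n + f n := by ring
      _ ≤ F (n + j * ((k + 1) * l)) + f (n + j * ((k + 1) * l)) :=
        add_le_add ih ((hfmul (j * l) n).trans_eq (by ring_nf))
      _ ≤ F (l + (n + j * ((k + 1) * l))) := hadd _
      _ ≤ F (l + (n + j * ((k + 1) * l)) + k * l) := hFmul k _
      _ = F (n + (j + 1) * ((k + 1) * l)) := by ring_nf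

theorem succ_iff_exists_natDegree_le :
    GrowthDegreeLT (d + 1) f ↔ ∃ p : ℕ[X], p.natDegree ≤ d ∧ ∀ n, f n ≤ p.eval n := by
  constructor
  · rintro ⟨p, hp, hbound⟩
    obtain ⟨N, hN⟩ := eventually_atTop.1 hbound
    refine ⟨p + C (∑ j ∈ Finset.range N, f j), ?_, fun n => ?_⟩
    · rw [natDegree_add_C]
      exact natDegree_le_of_degree_le (Order.lt_succ_iff.1 (mem_degreeLT.1 hp))
    · rw [eval_add, eval_C]
      rcases lt_or_ge n N with hn | hn
      · exact le_add_left (Finset.single_le_sum (fun _ _ => Nat.zero_le _)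
          (Finset.mem_range.2 hn))
      · exact le_add_right (hN n hn)
  · rintro ⟨p, hp, hbound⟩
    refine ⟨p, mem_degreeLT.2 ?_, .of_forall hbound⟩
    exact (natDegree_le_iff_degree_le.1 hp).trans_lt (by exact_mod_cast d.lt_succ_self)

theorem zero_iff : GrowthDegreeLT 0 f ↔ ∀ᶠ n in atTop, f n = 0 := by
  simp [GrowthDegreeLT, mem_degreeLT]

end GrowthDegreeLT

end GrowthDegree

section Sequences

variable {X : Type*}

/-- The beginning of length `n` of an infinite sequence. -/
def beginning (w : ℕ → X) (n : ℕ) : List X := List.ofFn fun i : Fin n => w i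

@[simp]
theorem length_beginning (w : ℕ → X) (n : ℕ) : (beginning w n).length = n := List.length_ofFn

theorem beginning_add (w : ℕ → X) (m n : ℕ) :
    beginning w (m + n) = beginning w m ++ beginning (fun t => w (m + t)) n := List.ofFn_add

theorem beginning_eq_beginning_iff {w w' : ℕ → X} {n : ℕ} :
    beginning w n = beginning w' n ↔ ∀ t < n, w t = w' t := by
  rw [beginning, beginning, List.ofFn_inj, funext_iff, Fin.forall_iff]

theorem wappend_of_lt {m : ℕ} (v : Fin m → X) (u : ℕ → X) {i : ℕ} (hi : i < m) :
    wappend v u i = v ⟨i, hi⟩ := dif_pos hi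

@[simp]
theorem wappend_fin {m : ℕ} (v : Fin m → X) (u : ℕ → X) (i : Fin m) : wappend v u i = v i :=
  wappend_of_lt v u i.2

@[simp]
theorem wappend_add {m : ℕ} (v : Fin m → X) (u : ℕ → X) (j : ℕ) : wappend v u (m + j) = u j := by
  simp [wappend]

theorem beginning_wappend_add {m : ℕ} (v : Fin m → X) (u : ℕ → X) (n : ℕ) :
    beginning (wappend v u) (m + n) = List.ofFn v ++ beginning u n := by
  rw [beginning_add]
  simp only [beginning, wappend_fin, wappend_add]

variable {Q : Type*} {step : Q → X → Q}

theorem foldl_beginning_add (q : Q) (w : ℕ → X) (m n : ℕ) :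
    (beginning w (m + n)).foldl step q =
      (beginning (fun t => w (m + t)) n).foldl step ((beginning w m).foldl step q) := by
  rw [beginning_add, List.foldl_append]

theorem foldl_beginning_add_mul {q : Q} {w : ℕ → X} {m l : ℕ}
    (hw : ∀ t, w (m + l + t) = w (m + t))
    (hstate : (beginning w (m + l)).foldl step q = (beginning w m).foldl step q) (n : ℕ) :
    (beginning w (m + n * l)).foldl step q = (beginning w m).foldl step q := by
  induction n with
  | zero => simp
  | succ n ih =>
    rw [foldl_beginning_add] at ih
    rw [Nat.succ_mul, add_comm _ l, ← add_assoc, foldl_beginning_add, hstate, funext hw, ih]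

theorem foldl_flatten_replicate {q : Q} {a : List X} (ha : a.foldl step q = q) (n : ℕ) :
    (List.replicate n a).flatten.foldl step q = q := by
  induction n with
  | zero => rfl
  | succ n ih => rw [List.replicate_succ, List.flatten_cons, List.foldl_append, ha, ih]

theorem exists_foldl_beginning_add_eq [Finite Q] (step : Q → X → Q) (q : Q) (w : ℕ → X) :
    ∃ m l, 0 < l ∧ m + l ≤ Nat.card Q ∧
      (beginning w (m + l)).foldl step q = (beginning w m).foldl step q := by
  have hcard : ¬ Function.Injective
      fun n : Fin (Nat.card Q + 1) => (beginning w n).foldl step q := fun hinj => by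
    simpa using Nat.card_le_card_of_injective _ hinj
  obtain ⟨i, j, hij, hne⟩ := Function.not_injective_iff.1 hcard
  wlog hlt : i < j generalizing i j
  · exact this j i hij.symm hne.symm (hne.lt_or_gt.resolve_left hlt)
  have hadd : (i : ℕ) + (j - i) = j := Nat.add_sub_cancel' hlt.le
  refine ⟨i, j - i, Nat.sub_pos_of_lt hlt, ?_, ?_⟩ <;> rw [hadd]
  exacts [j.is_le, hij.symm]

end Sequences

section WordCount

variable {Q X : Type*} (step : Q → X → Q) (A : Set Q)

/-- The number of words of length `n` that lead from the state `q` into the set `A` of states of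
the automaton with transition function `step`. -/
noncomputable def wordCount (q : Q) (n : ℕ) : ℕ :=
  {v : Fin n → X | (List.ofFn v).foldl step q ∈ A}.ncard

theorem wordCount_zero_le (q : Q) : wordCount step A q 0 ≤ 1 :=
  Set.ncard_le_one_of_subsingleton _

theorem wordCount_zero_of_mem {q : Q} (hq : q ∈ A) : wordCount step A q 0 = 1 := by
  simp [wordCount, hq]

section Fintype

variable [Fintype X]

open scoped Classical in
theorem wordCount_eq_sum (q : Q) (n : ℕ) : wordCount step A q n =
    ∑ v : Fin n → X, if (List.ofFn v).foldl step q ∈ A then 1 else 0 := by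
  rw [wordCount, Set.ncard_eq_toFinset_card', Set.toFinset_ofPred, Finset.card_filter]

theorem wordCount_add (q : Q) (m n : ℕ) : wordCount step A q (m + n) =
    ∑ v : Fin m → X, wordCount step A ((List.ofFn v).foldl step q) n := by
  simp only [wordCount_eq_sum]
  rw [← (Fin.appendEquiv m n).sum_comp, Fintype.sum_prod_type]
  refine Finset.sum_congr rfl fun v _ => Finset.sum_congr rfl fun v' _ => ?_
  rw [← List.foldl_append, ← List.ofFn_fin_append]
  rfl

theorem wordCount_succ (q : Q) (n : ℕ) :
    wordCount step A q (n + 1) = ∑ x, wordCount step A (step q x) n := by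
  rw [add_comm, wordCount_add, ← (Equiv.funUnique (Fin 1) X).symm.sum_comp]
  simp

/-- Each word counted on the left is split at the first position where its state is outside `B`. -/
theorem wordCount_le_convolution (B : Set Q) {G : ℕ → ℕ}
    (hG : ∀ s ∉ B, ∀ n, wordCount step A s n ≤ G n) (q : Q) (n : ℕ) :
    wordCount step A q n ≤ G n + wordCount step B q n +
      Fintype.card X * ∑ j ∈ Finset.range n, wordCount step B q j * G (n - 1 - j) := by
  induction n generalizing q with
  | zero =>
    by_cases hq : q ∈ B
    · rw [wordCount_zero_of_mem step B hq]
      exact le_add_right (le_add_left (wordCount_zero_le step A q))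
    · exact le_add_right (le_add_right (hG q hq 0))
  | succ n ih =>
    by_cases hq : q ∈ B
    swap
    · exact le_add_right (le_add_right (hG q hq (n + 1)))
    calc wordCount step A q (n + 1) = ∑ x, wordCount step A (step q x) n :=
          wordCount_succ step A q n
      _ ≤ ∑ x, (G n + wordCount step B (step q x) n + Fintype.card X *
          ∑ j ∈ Finset.range n, wordCount step B (step q x) j * G (n - 1 - j)) :=
          Finset.sum_le_sum fun x _ => ih (step q x)
      _ = wordCount step B q (n + 1) + Fintype.card X *
          (∑ j ∈ Finset.range n, wordCount step B q (j + 1) * G (n - 1 - j) + G n) := by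
          simp only [wordCount_succ, Finset.sum_mul, Finset.sum_add_distrib, ← Finset.mul_sum,
            Finset.sum_const, Finset.card_univ, smul_eq_mul]
          rw [Finset.sum_comm]
          ring
      _ = wordCount step B q (n + 1) + Fintype.card X *
          ∑ j ∈ Finset.range (n + 1), wordCount step B q j * G (n + 1 - 1 - j) := by
          rw [Finset.sum_range_succ', wordCount_zero_of_mem step B hq]
          simp only [Nat.add_sub_cancel, Nat.sub_zero, one_mul, Nat.sub_sub, Nat.add_comm 1]
      _ ≤ _ := by
          gcongr
          exact Nat.le_add_left _ _

end Fintype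

section Finite

variable [Finite X] {step A}

theorem wordCount_foldl_le (q : Q) (r : List X) (n : ℕ) :
    wordCount step A (r.foldl step q) n ≤ wordCount step A q (r.length + n) := by
  cases nonempty_fintype X
  obtain ⟨m, v, rfl⟩ := List.exists_iff_exists_tuple.1 ⟨r, rfl⟩
  rw [List.length_ofFn, wordCount_add]
  exact Finset.single_le_sum (f := fun v => wordCount step A ((List.ofFn v).foldl step q) n)
    (fun _ _ => Nat.zero_le _) (Finset.mem_univ v)

theorem wordCount_foldl_add_le (q : Q) {r r' : List X} (hlen : r'.length = r.length)
    (hne : r ≠ r') (n : ℕ) :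
    wordCount step A (r.foldl step q) n + wordCount step A (r'.foldl step q) n ≤
      wordCount step A q (r.length + n) := by
  cases nonempty_fintype X
  obtain ⟨m, v, rfl⟩ := List.exists_iff_exists_tuple.1 ⟨r, rfl⟩
  obtain ⟨m', v', rfl⟩ := List.exists_iff_exists_tuple.1 ⟨r', rfl⟩
  obtain rfl : m' = m := by simpa using hlen
  rw [List.length_ofFn, wordCount_add]
  exact Finset.add_le_sum (f := fun v => wordCount step A ((List.ofFn v).foldl step q) n)
    (fun _ _ => Nat.zero_le _) (Finset.mem_univ v) (Finset.mem_univ v')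
    fun h => hne (congrArg List.ofFn h)

theorem GrowthDegreeLT.wordCount_foldl {d : ℕ} {q : Q}
    (hq : GrowthDegreeLT d (wordCount step A q)) (r : List X) :
    GrowthDegreeLT d (wordCount step A (r.foldl step q)) :=
  (hq.comp_add_right r.length).mono fun n =>
    (wordCount_foldl_le q r n).trans_eq (by rw [add_comm])

end Finite

end WordCount

section HeavyStates

variable {Q X : Type*} (step : Q → X → Q) (A : Set Q) (d : ℕ)

/-- The states from which the number of words leading into `A` is not bounded by a polynomial of
degree less than `d`. -/
def heavyStates : Set Q := {s | ¬ GrowthDegreeLT d (wordCount step A s)}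

/-- The infinite sequences that pass only through heavy states when read from the state `q`. -/
def heavySequences (q : Q) : Set (ℕ → X) :=
  {w | ∀ n, (beginning w n).foldl step q ∈ heavyStates step A d}

variable {step A d}

theorem foldl_notMem_heavyStates [Finite X] {q : Q} (hq : q ∉ heavyStates step A d)
    (r : List X) : r.foldl step q ∉ heavyStates step A d :=
  not_not_intro ((not_not.1 hq).wordCount_foldl r)

theorem exists_step_mem_heavyStates [Finite X] {q : Q} (hq : q ∈ heavyStates step A d) :
    ∃ x, step q x ∈ heavyStates step A d := by
  cases nonempty_fintype X
  by_contra! hlight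
  refine hq (GrowthDegreeLT.of_comp_succ ?_)
  simp only [wordCount_succ]
  exact .sum fun x _ => not_not.1 (hlight x)

theorem drop_mem_heavySequences {q : Q} {w : ℕ → X} (hw : w ∈ heavySequences step A d q) (m : ℕ) :
    (fun t => w (m + t)) ∈ heavySequences step A d ((beginning w m).foldl step q) := fun n => by
  rw [← foldl_beginning_add]
  exact hw (m + n)

theorem heavySequences_nonempty [Finite X] {q : Q} (hq : q ∈ heavyStates step A d) :
    (heavySequences step A d q).Nonempty := by
  choose x hx using fun s : heavyStates step A d => exists_step_mem_heavyStates s.2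
  let next : heavyStates step A d → heavyStates step A d := fun s => ⟨step s (x s), hx s⟩
  let w : ℕ → X := fun n => x (next^[n] ⟨q, hq⟩)
  have hstate : ∀ n, (beginning w n).foldl step q = next^[n] ⟨q, hq⟩ := fun n => by
    induction n with
    | zero => rfl
    | succ n ih =>
      rw [foldl_beginning_add, ih, Function.iterate_succ_apply']
      rfl
  exact ⟨w, fun n => hstate n ▸ Subtype.coe_prop _⟩

theorem exists_mem_heavySequences_extending [Finite X] {q : Q} {m : ℕ} {v : Fin m → X}
    (hv : (List.ofFn v).foldl step q ∈ heavyStates step A d) :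
    ∃ w ∈ heavySequences step A d q, ∀ i : Fin m, w i = v i := by
  obtain ⟨u, hu⟩ := heavySequences_nonempty hv
  refine ⟨wappend v u, fun n => ?_, wappend_fin v u⟩
  by_contra hlight
  refine foldl_notMem_heavyStates hlight (beginning (fun t => wappend v u (n + t)) m) ?_
  rw [← foldl_beginning_add, add_comm, beginning_wappend_add, List.foldl_append]
  exact hu n

/-- Following `r` once after any number of turns along `a` yields linearly many ways to reach the
state `r.foldl step q`, which costs its word count one degree. -/
theorem GrowthDegreeLT.wordCount_foldl_of_cycles [Finite X] {q : Q} {a r b : List X}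
    (hq : GrowthDegreeLT (d + 1) (wordCount step A q)) (ha : a.foldl step q = q)
    (hlen : r.length = a.length) (hne : a ≠ r) (hb : b ≠ [])
    (hcycle : b.foldl step (r.foldl step q) = r.foldl step q) :
    GrowthDegreeLT d (wordCount step A (r.foldl step q)) := by
  refine hq.of_add_le (List.length_pos_iff.2 hb) (l := a.length) (fun n => ?_) fun n => ?_
  · simpa only [ha] using wordCount_foldl_add_le (step := step) (A := A) q hlen hne n
  · simpa only [hcycle] using wordCount_foldl_le (step := step) (A := A) (r.foldl step q) b n

section Finite

variable [Finite Q] [Finite X] {q : Q}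

theorem growthDegreeLT_succ_of_wordCount_heavyStates_le {k : ℕ}
    (hk : ∀ n, wordCount step (heavyStates step A d) q n ≤ k) :
    GrowthDegreeLT (d + 1) (wordCount step A q) := by
  classical
  cases nonempty_fintype Q
  cases nonempty_fintype X
  let G : ℕ → ℕ := fun n => ∑ s with s ∉ heavyStates step A d, wordCount step A s n
  have hG : GrowthDegreeLT d G := .sum fun s hs => not_not.1 (Finset.mem_filter.1 hs).2
  have hle : ∀ s ∉ heavyStates step A d, ∀ n, wordCount step A s n ≤ G n := fun s hs n =>
    Finset.single_le_sum (f := fun s => wordCount step A s n) (fun _ _ => Nat.zero_le _)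
      (by simpa using hs)
  refine ((hG.succ.add (.const d k)).add
    (hG.sum_range.const_mul (Fintype.card X * k))).mono fun n => ?_
  refine (wordCount_le_convolution step A _ hle q n).trans ?_
  rw [mul_assoc, ← Finset.sum_range_reflect G, Finset.mul_sum _ _ k]
  gcongr <;> exact hk _

theorem growthDegreeLT_succ_of_finite {W : Set (ℕ → X)} (hW : W.Finite)
    (hlight : ∀ (m : ℕ) (v : Fin m → X), (∀ w ∈ W, ¬ ∀ i : Fin m, w i = v i) →
      GrowthDegreeLT d (wordCount step A ((List.ofFn v).foldl step q))) :
    GrowthDegreeLT (d + 1) (wordCount step A q) := by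
  refine growthDegreeLT_succ_of_wordCount_heavyStates_le (k := W.ncard) fun n => ?_
  have hsub : {v : Fin n → X | (List.ofFn v).foldl step q ∈ heavyStates step A d} ⊆
      (fun (w : ℕ → X) (i : Fin n) => w i) '' W := fun v hv => by
    by_contra hout
    exact hv (hlight n v fun w hw hwv => hout ⟨w, hw, funext hwv⟩)
  exact (Set.ncard_le_ncard hsub (hW.image _)).trans (Set.ncard_image_le hW)

theorem beginning_eq_of_foldl_eq (hq : GrowthDegreeLT (d + 1) (wordCount step A q))
    {w : ℕ → X} (hw : w ∈ heavySequences step A d q) {a : List X} (ha : a.foldl step q = q) :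
    beginning w a.length = a := by
  by_contra hne
  obtain ⟨i, j, hij, hstate⟩ : ∃ i j : ℕ, i < j ∧
      (beginning w ((i + 1) * a.length)).foldl step q =
        (beginning w ((j + 1) * a.length)).foldl step q :=
    Set.finite_univ.exists_lt_map_eq_of_forall_mem fun _ => Set.mem_univ _
  have hpos : 0 < a.length := List.length_pos_iff.2 fun h => hne (by simp [h, beginning])
  have hdiff : (List.replicate (i + 1) a).flatten ≠ beginning w ((i + 1) * a.length) := fun h => by
    rw [List.replicate_succ, List.flatten_cons, Nat.succ_mul, add_comm, beginning_add] at h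
    exact hne (List.append_inj_left h (length_beginning w _).symm).symm
  have hreturn : (j + 1) * a.length = (i + 1) * a.length + (j - i) * a.length := by
    rw [← add_mul]
    congr 1
    omega
  refine hw ((i + 1) * a.length) (hq.wordCount_foldl_of_cycles (foldl_flatten_replicate ha (i + 1))
    (by simp) hdiff (b := beginning (fun t => w ((i + 1) * a.length + t)) ((j - i) * a.length))
    (List.length_pos_iff.1 ?_) ?_)
  · rw [length_beginning]
    exact Nat.mul_pos (Nat.sub_pos_of_lt hij) hpos
  · rw [← foldl_beginning_add, ← hreturn, hstate]

theorem heavySequences_subsingleton (hq : GrowthDegreeLT (d + 1) (wordCount step A q))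
    {a : List X} (ha : a.foldl step q = q) (hne : a ≠ []) :
    (heavySequences step A d q).Subsingleton := fun w hw w' hw' => by
  funext t
  have hcycle : (List.replicate (t + 1) a).flatten.foldl step q = q :=
    foldl_flatten_replicate ha (t + 1)
  have hlt : t < (List.replicate (t + 1) a).flatten.length := by
    have := List.length_pos_iff.2 hne
    simp only [List.length_flatten, List.map_replicate, List.sum_replicate, smul_eq_mul]
    nlinarith
  refine beginning_eq_beginning_iff.1 ?_ t hlt
  rw [beginning_eq_of_foldl_eq hq hw hcycle, beginning_eq_of_foldl_eq hq hw' hcycle]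

theorem heavySequences_foldl_beginning_subsingleton
    (hq : GrowthDegreeLT (d + 1) (wordCount step A q)) {w : ℕ → X} {m l : ℕ} (hl : 0 < l)
    (hstate : (beginning w (m + l)).foldl step q = (beginning w m).foldl step q) :
    (heavySequences step A d ((beginning w m).foldl step q)).Subsingleton := by
  rw [foldl_beginning_add] at hstate
  exact heavySequences_subsingleton (hq.wordCount_foldl _) hstate
    (List.length_pos_iff.1 (by rwa [length_beginning]))

theorem periodic_of_mem_heavySequences (hq : GrowthDegreeLT (d + 1) (wordCount step A q))
    {w : ℕ → X} (hw : w ∈ heavySequences step A d q) {m l : ℕ} (hl : 0 < l)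
    (hstate : (beginning w (m + l)).foldl step q = (beginning w m).foldl step q)
    (t : ℕ) : w (m + l + t) = w (m + t) :=
  congrFun (heavySequences_foldl_beginning_subsingleton hq hl hstate
    (hstate ▸ drop_mem_heavySequences hw (m + l)) (drop_mem_heavySequences hw m)) t

theorem finite_heavySequences (hq : GrowthDegreeLT (d + 1) (wordCount step A q)) :
    (heavySequences step A d q).Finite := by
  refine Set.Finite.of_injOn (f := fun w (i : Fin (Nat.card Q)) => w i)
    (fun _ _ => Set.mem_univ _) (fun w hw w' hw' hww' => ?_) Set.finite_univ
  obtain ⟨m, l, hl, hcard, hstate⟩ := exists_foldl_beginning_add_eq step q w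
  have hagree : ∀ t < m, w t = w' t := fun t ht => congrFun hww' ⟨t, by omega⟩
  have hdrop : (fun t => w' (m + t)) ∈ heavySequences step A d ((beginning w m).foldl step q) :=
    beginning_eq_beginning_iff.2 hagree ▸ drop_mem_heavySequences hw' m
  have htail := heavySequences_foldl_beginning_subsingleton hq hl hstate
    (drop_mem_heavySequences hw m) hdrop
  funext t
  rcases lt_or_ge t m with ht | ht
  · exact hagree t ht
  · simpa only [Nat.add_sub_cancel' ht] using congrFun htail (t - m)

theorem growthDegreeLT_succ_iff_exists_finite : GrowthDegreeLT (d + 1) (wordCount step A q) ↔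
    ∃ W : Set (ℕ → X), W.Finite ∧
      (∀ w ∈ W, ∃ m l, 0 < l ∧ (∀ t, w (m + l + t) = w (m + t)) ∧
        ∀ n, (beginning w (m + n * l)).foldl step q = (beginning w m).foldl step q) ∧
      ∀ (m : ℕ) (v : Fin m → X), (∀ w ∈ W, ¬ ∀ i : Fin m, w i = v i) →
        GrowthDegreeLT d (wordCount step A ((List.ofFn v).foldl step q)) := by
  refine ⟨fun hq => ⟨heavySequences step A d q, finite_heavySequences hq, fun w hw => ?_,
    fun m v hv => ?_⟩, fun ⟨W, hW, _, hlight⟩ => growthDegreeLT_succ_of_finite hW hlight⟩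
  · obtain ⟨m, l, hl, -, hstate⟩ := exists_foldl_beginning_add_eq step q w
    have hperiodic := periodic_of_mem_heavySequences hq hw hl hstate
    exact ⟨m, l, hl, hperiodic, foldl_beginning_add_mul hperiodic hstate⟩
  · by_contra hheavy
    obtain ⟨w, hw, hwv⟩ := exists_mem_heavySequences_extending hheavy
    exact hv w hw hwv

end Finite

end HeavyStates

section TreeAutomorphisms

variable {X : Type*}

theorem wappend_agree_iff {m : ℕ} (v : Fin m → X) (u u' : ℕ → X) (n : ℕ) :
    (∀ i, i < m + n → wappend v u i = wappend v u' i) ↔ ∀ i, i < n → u i = u' i := by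
  constructor
  · intro h i hi
    simpa only [wappend_add] using h (m + i) (by omega)
  · intro h i hi
    rcases lt_or_ge i m with him | him
    · rw [wappend_of_lt v u him, wappend_of_lt v u' him]
    · obtain ⟨j, rfl⟩ := Nat.exists_eq_add_of_le him
      rw [wappend_add, wappend_add]
      exact h j (by omega)

theorem eq_wappend {m : ℕ} {v : Fin m → X} {u w : ℕ → X} (hv : ∀ i : Fin m, w i = v i)
    (hu : ∀ j, w (m + j) = u j) : w = wappend v u := by
  funext i
  rcases lt_or_ge i m with him | him
  · rw [wappend_of_lt v u him]
    exact hv ⟨i, him⟩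
  · obtain ⟨j, rfl⟩ := Nat.exists_eq_add_of_le him
    rw [wappend_add, hu]

theorem wappend_append {m n : ℕ} (v : Fin m → X) (v' : Fin n → X) (u : ℕ → X) :
    wappend (Fin.append v v') u = wappend v (wappend v' u) := by
  have htail : (fun j => wappend (Fin.append v v') u (m + j)) = wappend v' u :=
    eq_wappend (fun i => (wappend_fin _ u (i.natAdd m)).trans (Fin.append_right v v' i))
      fun k => by rw [← add_assoc, wappend_add]
  exact eq_wappend (fun i => (wappend_fin _ u (i.castAdd n)).trans (Fin.append_left v v' i))
    (congrFun htail)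

namespace IsTreeAut

variable {f : Equiv.Perm (ℕ → X)}

theorem apply_wappend_of_lt (hf : IsTreeAut f) {m : ℕ} (v : Fin m → X) (u u' : ℕ → X) {i : ℕ}
    (hi : i < m) : f (wappend v u) i = f (wappend v u') i :=
  (hf m (wappend v u) (wappend v u')).1
    (fun i hi => by rw [wappend_of_lt v u hi, wappend_of_lt v u' hi]) i hi

theorem injective_restrictFun (hf : IsTreeAut f) {m : ℕ} (v : Fin m → X) :
    Function.Injective (restrictFun f v) := fun u u' h => by
  have happly : f (wappend v u) = f (wappend v u') := by
    funext i
    rcases lt_or_ge i m with hi | hi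
    · exact hf.apply_wappend_of_lt v u u' hi
    · obtain ⟨j, rfl⟩ := Nat.exists_eq_add_of_le hi
      exact congrFun h j
  funext j
  rw [← wappend_add v u j, f.injective happly, wappend_add]

theorem surjective_restrictFun (hf : IsTreeAut f) {m : ℕ} (v : Fin m → X) :
    Function.Surjective (restrictFun f v) := fun y => by
  let y' := wappend (fun i : Fin m => f (wappend v y) i) y
  have hsymm : f.symm y' = wappend v fun j => f.symm y' (m + j) := by
    refine eq_wappend (fun i => ?_) fun _ => rfl
    rw [← wappend_fin v y i]
    refine (hf m (f.symm y') (wappend v y)).2 (fun i hi => ?_) i i.2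
    rw [Equiv.apply_symm_apply]
    exact wappend_of_lt _ _ hi
  refine ⟨fun j => f.symm y' (m + j), funext fun j => ?_⟩
  rw [restrictFun, ← hsymm, Equiv.apply_symm_apply]
  exact wappend_add _ _ _

theorem restrictPerm_apply (hf : IsTreeAut f) {m : ℕ} (v : Fin m → X) (u : ℕ → X) (j : ℕ) :
    restrictPerm f v u j = f (wappend v u) (m + j) := by
  rw [restrictPerm, dif_pos ⟨hf.injective_restrictFun v, hf.surjective_restrictFun v⟩]
  rfl

protected theorem restrictPerm (hf : IsTreeAut f) {m : ℕ} (v : Fin m → X) :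
    IsTreeAut (restrictPerm f v) := fun n u u' => by
  rw [← wappend_agree_iff v, hf (m + n)]
  simp only [hf.restrictPerm_apply]
  refine ⟨fun h i hi => h (m + i) (by omega), fun h i hi => ?_⟩
  rcases lt_or_ge i m with him | him
  · exact hf.apply_wappend_of_lt v u u' him
  · obtain ⟨j, rfl⟩ := Nat.exists_eq_add_of_le him
    exact h j (by omega)

theorem restrictPerm_zero (hf : IsTreeAut f) (v : Fin 0 → X) : restrictPerm f v = f := by
  ext u j
  rw [hf.restrictPerm_apply, zero_add, ← eq_wappend (fun i => i.elim0) fun j => by rw [zero_add]]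

theorem restrictPerm_restrictPerm (hf : IsTreeAut f) {m n : ℕ} (v : Fin m → X) (v' : Fin n → X) :
    restrictPerm (restrictPerm f v) v' = restrictPerm f (Fin.append v v') := by
  ext u j
  rw [(hf.restrictPerm v).restrictPerm_apply, hf.restrictPerm_apply, hf.restrictPerm_apply,
    wappend_append, add_assoc]

theorem restrictTrivial_iff (hf : IsTreeAut f) {m : ℕ} (v : Fin m → X) :
    RestrictTrivial f v ↔ restrictPerm f v = 1 := by
  constructor
  · intro h
    ext u j
    rw [hf.restrictPerm_apply, h _ (wappend_fin v u) _ (Nat.le_add_right _ _), wappend_add]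
    rfl
  · intro h u hu i hi
    obtain ⟨j, rfl⟩ := Nat.exists_eq_add_of_le hi
    rw [eq_wappend hu fun j => rfl, ← hf.restrictPerm_apply, h, wappend_add]
    rfl

theorem finiteState_restrictPerm (hf : IsTreeAut f) (hfs : FiniteState f) {m : ℕ} (v : Fin m → X) :
    FiniteState (restrictPerm f v) := by
  refine hfs.subset ?_
  rintro _ ⟨n, v', rfl⟩
  exact ⟨m + n, Fin.append v v', (hf.restrictPerm_restrictPerm v v').symm⟩

end IsTreeAut

theorem thetaGrowth_eq_zero_iff [Finite X] {f : Equiv.Perm (ℕ → X)} {n : ℕ} :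
    thetaGrowth f n = 0 ↔ ∀ u, ∀ i, n ≤ i → f u i = u i := by
  rw [thetaGrowth, Set.ncard_eq_zero, Set.eq_empty_iff_forall_notMem]
  simp only [Set.mem_ofPred_eq, not_not]
  exact ⟨fun h u => h (fun i : Fin n => u i) u fun _ => rfl, fun h _ u _ => h u⟩

theorem isFinitary_iff_growthDegreeLT_zero [Finite X] {f : Equiv.Perm (ℕ → X)} :
    IsFinitary f ↔ GrowthDegreeLT 0 (thetaGrowth f) := by
  simp only [GrowthDegreeLT.zero_iff, IsFinitary, thetaGrowth_eq_zero_iff]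
  exact ⟨fun ⟨n, hn⟩ => Filter.eventually_atTop.2 ⟨n, fun m hm u i hi => hn u i (hm.trans hi)⟩,
    Filter.Eventually.exists⟩

theorem memP_iff_growthDegreeLT [Finite X] {f : Equiv.Perm (ℕ → X)} (hf : IsTreeAut f)
    (hfs : FiniteState f) (d : ℕ) :
    MemP ((d : ℤ) - 1) f ↔ GrowthDegreeLT d (thetaGrowth f) := by
  cases d with
  | zero =>
    rw [← isFinitary_iff_growthDegreeLT_zero]
    simp [MemP, hf]
  | succ d =>
    have hd : (d : ℤ) ≠ -1 := by omega
    rw [GrowthDegreeLT.succ_iff_exists_natDegree_le]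
    simp [MemP, hf, hfs, hd]

end TreeAutomorphisms

section Restrictions

variable {X : Type*} {g : Equiv.Perm (ℕ → X)}

/-- The set of restrictions `g|_v`, i.e. of the states of the automaton that computes `g`. -/
def restrictions (g : Equiv.Perm (ℕ → X)) : Set (Equiv.Perm (ℕ → X)) :=
  {h | ∃ (m : ℕ) (v : Fin m → X), restrictPerm g v = h}

namespace IsTreeAut

theorem of_mem_restrictions (hg : IsTreeAut g) {h : Equiv.Perm (ℕ → X)} (hh : h ∈ restrictions g) :
    IsTreeAut h := by
  obtain ⟨m, v, rfl⟩ := hh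
  exact hg.restrictPerm v

theorem restrictPerm_mem_restrictions (hg : IsTreeAut g) {h : Equiv.Perm (ℕ → X)}
    (hh : h ∈ restrictions g) {n : ℕ} (v : Fin n → X) : restrictPerm h v ∈ restrictions g := by
  obtain ⟨m, v', rfl⟩ := hh
  exact ⟨m + n, Fin.append v' v, (hg.restrictPerm_restrictPerm v' v).symm⟩

/-- The transition function of the automaton that computes `g`: it sends a state to its
restriction at a one-letter word. -/
noncomputable def step (hg : IsTreeAut g) (s : restrictions g) (x : X) : restrictions g :=
  ⟨restrictPerm s fun _ : Fin 1 => x, hg.restrictPerm_mem_restrictions s.2 _⟩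

theorem coe_foldl_step (hg : IsTreeAut g) (s : restrictions g) {m : ℕ} (v : Fin m → X) :
    ((List.ofFn v).foldl hg.step s).1 = restrictPerm s.1 v := by
  have hs := hg.of_mem_restrictions s.2
  induction m with
  | zero => exact (hs.restrictPerm_zero v).symm
  | succ m ih =>
    rw [List.ofFn_succ_last, List.foldl_append]
    refine (congrArg (fun h => restrictPerm h fun _ : Fin 1 => v (Fin.last m)) (ih _)).trans ?_
    rw [hs.restrictPerm_restrictPerm, Fin.append_right_eq_snoc]
    exact congrArg _ (Fin.snoc_init_self v)

theorem wordCount_step_eq_thetaGrowth (hg : IsTreeAut g) (s : restrictions g) :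
    wordCount hg.step {h | h.1 ≠ 1} s = thetaGrowth s.1 := by
  funext n
  simp only [wordCount, thetaGrowth, (hg.of_mem_restrictions s.2).restrictTrivial_iff,
    Set.mem_ofPred_eq, coe_foldl_step]

end IsTreeAut

theorem memP_iff_exists_finite_sequences [Finite X] (hg : IsTreeAut g) (hfs : FiniteState g)
    (d : ℕ) : MemP (d : ℤ) g ↔ ∃ W : Set (ℕ → X), W.Finite ∧
      (∀ w ∈ W, ∃ m l, 0 < l ∧ (∀ t, w (m + l + t) = w (m + t)) ∧
        ∀ n, restrictPerm g (fun i : Fin (m + n * l) => w i) =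
          restrictPerm g fun i : Fin m => w i) ∧
      ∀ (m : ℕ) (v : Fin m → X), (∀ w ∈ W, ¬ ∀ i : Fin m, w i = v i) →
        MemP ((d : ℤ) - 1) (restrictPerm g v) := by
  have : Finite (restrictions g) := hfs
  let q : restrictions g := ⟨g, 0, Fin.elim0, hg.restrictPerm_zero _⟩
  have hmemP : ∀ (s : restrictions g) (d : ℕ), MemP ((d : ℤ) - 1) s.1 ↔
      GrowthDegreeLT d (wordCount hg.step {h | h.1 ≠ 1} s) := fun s d => by
    obtain ⟨_, m, v, rfl⟩ := s
    rw [hg.wordCount_step_eq_thetaGrowth]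
    exact memP_iff_growthDegreeLT (hg.restrictPerm v) (hg.finiteState_restrictPerm hfs v) d
  have hd : MemP (d : ℤ) g ↔ MemP (((d + 1 : ℕ) : ℤ) - 1) q.1 := by simp [q]
  rw [hd, hmemP, growthDegreeLT_succ_iff_exists_finite]
  simp only [← hmemP, hg.coe_foldl_step, beginning, Subtype.ext_iff, q]

end Restrictions

section EventuallyPeriodic

variable {X : Type*} [Nonempty X]

theorem epSeq_eq_of_periodic {m l : ℕ} (hl : 0 < l) {w : ℕ → X}
    (hw : ∀ t, w (m + l + t) = w (m + t)) :
    epSeq m l (fun i => w i) (fun i => w (m + i)) = w := by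
  have hper : Function.Periodic (fun t => w (m + t)) l := fun t => by
    simpa only [add_assoc, add_comm l] using hw t
  funext j
  rcases lt_or_ge j m with h | h
  · simp [epSeq, h]
  · have hmod := hper.map_mod_nat (j - m)
    simp only [epSeq, not_lt.2 h, hl, dif_pos, dif_neg, not_false_eq_true]
    rw [hmod, Nat.add_sub_cancel' h]

theorem epSeq_fin {m l : ℕ} (v : Fin m → X) (u : Fin l → X) (i : Fin m) :
    epSeq m l v u i = v i := dif_pos i.2

theorem epSeq_periodic {m l : ℕ} (v : Fin m → X) (u : Fin l → X) (t : ℕ) :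
    epSeq m l v u (m + l + t) = epSeq m l v u (m + t) := by
  simp [epSeq, add_assoc]

end EventuallyPeriodic

/-- **Proposition `pr:polydescription`.** Let `X` be a finite set and
`d ≥ 0`. A finite-state automorphism `g` of `X^*` belongs to `P_d(X)` if and only if there
is a finite set `W = {v_i·u_i^ω : i < k}` of eventually periodic sequences in `X^ω` such
that the restrictions `g|_{v_i u_i^n}` do not depend on `n`, and `g|_v ∈ P_{d-1}(X)` for
every `v ∈ X^*` which is not a beginning of any `v_i·u_i^ω`. -/
theorem stmt_11 (X : Type*) [Fintype X] [Nonempty X] (d : ℤ) (hd : 0 ≤ d)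
    (g : Equiv.Perm (ℕ → X)) (hg : IsTreeAut g) (hfs : FiniteState g) :
    MemP d g ↔
      ∃ (k : ℕ) (la lb : Fin k → ℕ) (v : ∀ i : Fin k, Fin (la i) → X)
        (u : ∀ i : Fin k, Fin (lb i) → X),
        (∀ i, 0 < lb i) ∧
        (∀ (i : Fin k) (n : ℕ),
          restrictPerm g
              (fun j : Fin (la i + n * lb i) => epSeq (la i) (lb i) (v i) (u i) j) =
            restrictPerm g (v i)) ∧
        (∀ (m : ℕ) (vv : Fin m → X),
          (∀ i : Fin k, ¬ ∀ j : Fin m, epSeq (la i) (lb i) (v i) (u i) j = vv j) →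
          MemP (d - 1) (restrictPerm g vv)) := by
  obtain ⟨d, rfl⟩ := Int.eq_ofNat_of_zero_le hd
  rw [memP_iff_exists_finite_sequences hg hfs]
  constructor
  · rintro ⟨W, hW, hperiodic, hout⟩
    obtain ⟨k, w, -, rfl⟩ := hW.fin_param
    choose la lb hpos hper hstate using fun i => hperiodic (w i) ⟨i, rfl⟩
    have hep : ∀ i, epSeq (la i) (lb i) (fun j => w i j) (fun j => w i (la i + j)) = w i :=
      fun i => epSeq_eq_of_periodic (hpos i) (hper i)
    refine ⟨k, la, lb, fun i j => w i j, fun i j => w i (la i + j), hpos, ?_, ?_⟩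
    · simpa only [hep] using hstate
    · simpa only [hep, Set.forall_mem_range] using hout
  · rintro ⟨k, la, lb, v, u, hpos, hstate, hout⟩
    refine ⟨Set.range fun i => epSeq (la i) (lb i) (v i) (u i), Set.finite_range _, ?_, ?_⟩
    · rintro _ ⟨i, rfl⟩
      refine ⟨la i, lb i, hpos i, epSeq_periodic (v i) (u i), fun n => ?_⟩
      simpa only [epSeq_fin] using hstate i n
    · simpa only [Set.forall_mem_range] using hout
end
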